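/- (Weak-strong uniqueness for pressureless capillary fluids, classical form.) Let ν > 0, κ > 0, T > 0 and c > 0. Suppose (ρ₁, u₁) and (ρ₂, u₂) are two pairs of smooth (C^∞) functions on [0,T] × ℝ³ (with values in ℝ and ℝ³ respectively), ℤ³-periodic in the space variable, with ρᵢ ≥ c everywhere, each satisfying pointwise on (0,T) × ℝ³ the pressureless Navier–Stokes–Korteweg system ∂_t ρ + div(ρ u) = 0 and ∂_t(ρ u) + div(ρ u ⊗ u) − 2ν div(ρ Du) − 2κ² ρ ∇(Δρ) = 0, and with the same initial data: ρ₁(0,·) = ρ₂(0,·) and u₁(0,·) = u₂(0,·). Then ρ₁ = ρ₂ and u₁ = u₂ on [0,T] × ℝ³. -/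

import Mathlib

open scoped BigOperators
open MeasureTheory

noncomputable section

/-- Points of `ℝ³`, realized as `Fin 3 → ℝ`. -/
abbrev V3 : Type := Fin 3 → ℝ

/-- Partial derivative `∂ᵢ f` of a scalar field. -/
def pd (i : Fin 3) (f : V3 → ℝ) (x : V3) : ℝ := fderiv ℝ f x (Pi.single i 1)

/-- Gradient `∇f` of a scalar field. -/
def grad (f : V3 → ℝ) (x : V3) : V3 := fun i => pd i f x

/-- Divergence `div u` of a vector field. -/
def vdiv (u : V3 → V3) (x : V3) : ℝ := ∑ i, pd i (fun y => u y i) x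

/-- Laplacian `Δf` of a scalar field. -/
def lap (f : V3 → ℝ) (x : V3) : ℝ := ∑ i, pd i (fun y => pd i f y) x

/-- Divergence (row-wise) of a matrix field: `(div M)_i = ∑_j ∂_j M_{ij}`. -/
def mdiv (M : V3 → Fin 3 → Fin 3 → ℝ) (x : V3) : V3 :=
  fun i => ∑ j, pd j (fun y => M y i j) x

/-- Jacobian matrix `(∇u)_{ij} = ∂_j u_i` of a vector field. -/
def jacb (u : V3 → V3) (x : V3) : Fin 3 → Fin 3 → ℝ := fun i j => pd j (fun y => u y i) x

/-- Symmetric part `Du = (∇u + ∇ᵀu)/2` of the Jacobian. -/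
def symJ (u : V3 → V3) (x : V3) : Fin 3 → Fin 3 → ℝ :=
  fun i j => (jacb u x i j + jacb u x j i) / 2

/-- Antisymmetric part `Au = (∇u − ∇ᵀu)/2` of the Jacobian. -/
def asymJ (u : V3 → V3) (x : V3) : Fin 3 → Fin 3 → ℝ :=
  fun i j => (jacb u x i j - jacb u x j i) / 2

/-- Euclidean dot product on `ℝ³`. -/
def dot (a b : V3) : ℝ := ∑ i, a i * b i

/-- Squared Euclidean norm on `ℝ³`. -/
def normSq (a : V3) : ℝ := ∑ i, (a i) ^ 2

set_option linter.unusedSimpArgs false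
section core
variable {A : Type*} [CommRing A] [Algebra ℝ A] (Dt : Derivation ℝ A A)
  (Dx : Fin 3 → Derivation ℝ A A) (φ : A →ₐ[ℝ] ℝ)

def Lpl (f : A) : A := ∑ k, Dx k (Dx k f)
def SymD (u : Fin 3 → A) (i j : Fin 3) : A := (1/2 : ℝ) • (Dx j (u i) + Dx i (u j))
def ContE (r : A) (u : Fin 3 → A) : A := Dt r + ∑ i, Dx i (r * u i)
def MomE (ν κ : ℝ) (r : A) (u : Fin 3 → A) (i : Fin 3) : A :=
  Dt (r * u i) + ∑ j, Dx j (r * u i * u j)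
    - (2 * ν) • ∑ j, Dx j (r * SymD Dx u i j) - (2 * κ ^ 2) • (r * Dx i (Lpl Dx r))

theorem nonconservative (ν κ : ℝ) (r : A) (u : Fin 3 → A) (i : Fin 3)
    (hC : φ (ContE Dt Dx r u) = 0) (hM : φ (MomE Dt Dx ν κ r u i) = 0) :
    φ r * (φ (Dt (u i)) + ∑ j, φ (u j) * φ (Dx j (u i))) =
      2 * ν * ∑ j, (φ r * φ (Dx j (SymD Dx u i j)) + φ (Dx j r) * φ (SymD Dx u i j))
      + 2 * κ ^ 2 * (φ r * φ (Dx i (Lpl Dx r))) := by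
  simp only [ContE, MomE, Fin.sum_univ_three, Derivation.leibniz, map_add, map_sub, map_mul, map_smul, Derivation.map_smul,
    smul_eq_mul, smul_add, mul_add] at hC hM ⊢
  linear_combination hM - φ (u i) * hC

theorem kinetic (ν κ : ℝ) (r R : A) (u U : Fin 3 → A) (i : Fin 3) (hr : φ R ≠ 0)
    (hC1 : φ (ContE Dt Dx r u) = 0)
    (h1 : φ r * (φ (Dt (u i)) + ∑ j, φ (u j) * φ (Dx j (u i))) =
      2 * ν * ∑ j, (φ r * φ (Dx j (SymD Dx u i j)) + φ (Dx j r) * φ (SymD Dx u i j))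
      + 2 * κ ^ 2 * (φ r * φ (Dx i (Lpl Dx r))))
    (h2 : φ R * (φ (Dt (U i)) + ∑ j, φ (U j) * φ (Dx j (U i))) =
      2 * ν * ∑ j, (φ R * φ (Dx j (SymD Dx U i j)) + φ (Dx j R) * φ (SymD Dx U i j))
      + 2 * κ ^ 2 * (φ R * φ (Dx i (Lpl Dx R)))) :
    φ (Dt ((1/2 : ℝ) • (r * ((u i - U i) * (u i - U i))))) =
      φ (∑ j, Dx j ((-(1/2 : ℝ)) • (r * ((u i - U i) * (u i - U i)) * u j)
          + (2 * ν) • (r * SymD Dx (u - U) i j * (u i - U i))))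
      + φ (Dx i ((2 * κ ^ 2) • (r * (u i - U i) * Lpl Dx (r - R))))
      - 2 * κ ^ 2 * (φ (Dx i (r * (u i - U i))) * φ (Lpl Dx (r - R)))
      - φ r * ∑ j, φ (u i - U i) * φ (u j - U j) * φ (Dx j (U i))
      - 2 * ν * φ r * ∑ j, φ (SymD Dx (u - U) i j) * φ (Dx j (u i - U i))
      + 2 * ν * ∑ j, φ (u i - U i) * φ (SymD Dx U i j) *
          (φ (Dx j (r - R)) - φ (r - R) * (φ (Dx j R) / φ R)) := by
  have h2' : (φ (Dt (U i)) + ∑ j, φ (U j) * φ (Dx j (U i))) =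
      2 * ν * ∑ j, (φ (Dx j (SymD Dx U i j)) + (φ (Dx j R) / φ R) * φ (SymD Dx U i j))
      + 2 * κ ^ 2 * (φ (Dx i (Lpl Dx R))) := by
    simp only [Fin.sum_univ_three] at h2 ⊢
    field_simp
    linear_combination h2
  have hq : ∀ j, φ (Dx j R) = φ R * (φ (Dx j R) / φ R) := by intro j; field_simp
  have e0 := hq 0
  have e1 := hq 1
  have e2 := hq 2
  clear hq h2
  have hL : Lpl Dx (r - R) = Lpl Dx r - Lpl Dx R := by
    simp [Lpl]
  have hS : ∀ j, SymD Dx (u - U) i j = SymD Dx u i j - SymD Dx U i j := by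
    intro j
    simp only [SymD, Pi.sub_apply, map_sub, ← smul_sub]; congr 1; ring
  simp only [hL, hS]
  generalize Lpl Dx r = a at *
  generalize Lpl Dx R = b at *
  generalize SymD Dx u i = s at *
  generalize SymD Dx U i = S at *
  simp only [ContE, Fin.sum_univ_three, Derivation.leibniz, map_add, map_sub, map_mul, map_smul, Derivation.map_smul,
    smul_eq_mul] at *
  generalize φ (Dx 0 R) / φ R = q0 at *
  generalize φ (Dx 1 R) / φ R = q1 at *
  generalize φ (Dx 2 R) / φ R = q2 at *
  rw [e0, e1, e2]
  linear_combination (φ (u i) - φ (U i)) * h1 - (φ (u i) - φ (U i)) * φ r * h2' +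
    1/2 * (φ (u i) - φ (U i)) ^ 2 * hC1 

theorem potential (κ : ℝ) (ht : ∀ i f, Dt (Dx i f) = Dx i (Dt f))
    (hx : ∀ i j f, Dx i (Dx j f) = Dx j (Dx i f)) (d : A) (U : Fin 3 → A) :
    φ (Dt ((κ ^ 2) • ∑ i, Dx i d * Dx i d)) =
      φ (∑ i, Dx i ((2 * κ ^ 2) • (Dt d * Dx i d) +
        (2 * κ ^ 2) • (Dx i d * ∑ j, Dx j (d * U j)) - (κ ^ 2) • (U i * ∑ j, Dx j d * Dx j d)))
      - 2 * κ ^ 2 * (φ (Lpl Dx d) * φ (Dt d + ∑ j, Dx j (d * U j)))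
      - κ ^ 2 * ∑ i, ∑ j, φ (Dx i d) * φ (Dx i d) * φ (Dx j (U j))
      - 2 * κ ^ 2 * ∑ i, ∑ j, φ (Dx i d) * φ (Dx j d) * φ (Dx i (U j))
      - 2 * κ ^ 2 * ∑ i, ∑ j, φ (Dx i d) * φ d * φ (Dx i (Dx j (U j))) := by
  have h10 := hx 1 0
  have h20 := hx 2 0
  have h21 := hx 2 1
  simp only [Lpl, Fin.sum_univ_three, Derivation.leibniz, map_add, map_sub, map_mul, map_smul, Derivation.map_smul,
    smul_eq_mul, ht, h10, h20, h21]
  ring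

theorem masspart (d r : A) (w U : Fin 3 → A) 
    (h : φ (Dt d + ∑ j, Dx j (d * U j)) = - φ (∑ j, Dx j (r * w j))) :
    φ (Dt ((1/2 : ℝ) • (d * d))) =
      φ (∑ i, Dx i (-(d * r * w i) - (1/2 : ℝ) • (d * d * U i)))
      + φ r * ∑ i, φ (w i) * φ (Dx i d) - (1/2) * ∑ j, φ d * φ d * φ (Dx j (U j)) := by
  simp only [Fin.sum_univ_three, Derivation.leibniz, map_add, map_sub, map_mul, map_smul, Derivation.map_smul, map_neg,
    smul_eq_mul] at *
  linear_combination φ d * h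

def En (κ : ℝ) (r R : A) (u U : Fin 3 → A) : A :=
  ∑ i, (1/2 : ℝ) • (r * ((u i - U i) * (u i - U i))) + (κ ^ 2) • ∑ i, Dx i (r - R) * Dx i (r - R)
    + (1/2 : ℝ) • ((r - R) * (r - R))

def Flux (ν κ : ℝ) (r R : A) (u U : Fin 3 → A) (j : Fin 3) : A :=
  ∑ i, ((-(1/2 : ℝ)) • (r * ((u i - U i) * (u i - U i)) * u j)
          + (2 * ν) • (r * SymD Dx (u - U) i j * (u i - U i)))
  + (2 * κ ^ 2) • (r * (u j - U j) * Lpl Dx (r - R))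
  + ((2 * κ ^ 2) • (Dt (r - R) * Dx j (r - R)) +
        (2 * κ ^ 2) • (Dx j (r - R) * ∑ k, Dx k ((r - R) * U k))
        - (κ ^ 2) • (U j * ∑ k, Dx k (r - R) * Dx k (r - R)))
  + (-((r - R) * r * (u j - U j)) - (1/2 : ℝ) • ((r - R) * (r - R) * U j))

theorem energy_id (ν κ : ℝ) (ht : ∀ i f, Dt (Dx i f) = Dx i (Dt f))
    (hx : ∀ i j f, Dx i (Dx j f) = Dx j (Dx i f)) (r R : A) (u U : Fin 3 → A) (hr : φ R ≠ 0)
    (hC1 : φ (ContE Dt Dx r u) = 0) (hC2 : φ (ContE Dt Dx R U) = 0)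
    (hM1 : ∀ i, φ (MomE Dt Dx ν κ r u i) = 0) (hM2 : ∀ i, φ (MomE Dt Dx ν κ R U i) = 0) :
    φ (Dt (En Dx κ r R u U)) = φ (∑ j, Dx j (Flux Dt Dx ν κ r R u U j))
      - φ r * ∑ i, ∑ j, φ (u i - U i) * φ (u j - U j) * φ (Dx j (U i))
      - 2 * ν * φ r * ∑ i, ∑ j, φ (SymD Dx (u - U) i j) * φ (Dx j (u i - U i))
      + 2 * ν * ∑ i, ∑ j, φ (u i - U i) * φ (SymD Dx U i j) *
          (φ (Dx j (r - R)) - φ (r - R) * (φ (Dx j R) / φ R))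
      - κ ^ 2 * ∑ i, ∑ j, φ (Dx i (r - R)) * φ (Dx i (r - R)) * φ (Dx j (U j))
      - 2 * κ ^ 2 * ∑ i, ∑ j, φ (Dx i (r - R)) * φ (Dx j (r - R)) * φ (Dx i (U j))
      - 2 * κ ^ 2 * ∑ i, ∑ j, φ (Dx i (r - R)) * φ (r - R) * φ (Dx i (Dx j (U j)))
      + φ r * ∑ i, φ (u i - U i) * φ (Dx i (r - R))
      - (1/2) * ∑ j, φ (r - R) * φ (r - R) * φ (Dx j (U j)) := by
  have h : φ (Dt (r - R) + ∑ j, Dx j ((r - R) * U j)) = - φ (∑ j, Dx j (r * (u - U) j)) := by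
    simp only [ContE, Fin.sum_univ_three, Derivation.leibniz, map_add, map_sub, map_mul, Pi.sub_apply,
      smul_eq_mul] at *
    linear_combination hC1 - hC2
  have hm := masspart Dt Dx φ (r - R) r (u - U) U h
  have hp := potential Dt Dx φ κ ht hx (r - R) U
  have hk := fun i => kinetic Dt Dx φ ν κ r R u U i hr hC1
    (nonconservative Dt Dx φ ν κ r u i hC1 (hM1 i)) (nonconservative Dt Dx φ ν κ R U i hC2 (hM2 i))
  have k0 := hk 0
  have k1 := hk 1
  have k2 := hk 2
  rw [h] at hp
  clear hk h hM1 hM2 hC1 hC2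
  simp only [Pi.sub_apply] at hm hp
  unfold En Flux
  generalize r - R = d at *
  generalize SymD Dx (u - U) = s at *
  generalize SymD Dx U = S at *
  generalize Lpl Dx d = l at *
  simp only [map_add, map_sum] at *
  simp only [Fin.sum_univ_three, map_add, map_sub, map_neg] at *
  linear_combination k0 + k1 + k2 + hp + hm
end core

section analysis

def Sm : Subalgebra ℝ (ℝ × V3 → ℝ) where
  carrier := {f | ContDiff ℝ (⊤ : ℕ∞) f ∧
    ∀ t x (k : Fin 3 → ℤ), f (t, x + fun i => (k i : ℝ)) = f (t, x)}
  mul_mem' := by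
    rintro f g ⟨hf, hf'⟩ ⟨hg, hg'⟩
    exact ⟨hf.mul hg, fun t x k => by simp [hf', hg']⟩
  add_mem' := by
    rintro f g ⟨hf, hf'⟩ ⟨hg, hg'⟩
    exact ⟨hf.add hg, fun t x k => by simp [hf', hg']⟩
  algebraMap_mem' := fun r => ⟨contDiff_const, fun t x k => rfl⟩

theorem sm_diff (f : Sm) : Differentiable ℝ f.1 := f.2.1.differentiable (by simp)

theorem sm_cont (f : Sm) : Continuous f.1 := f.2.1.continuous

def dvFun (v : ℝ × V3) (f : Sm) : Sm := ⟨fun p => fderiv ℝ f.1 p v, by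
  refine ⟨(f.2.1.fderiv_right (m := (⊤ : ℕ∞)) (by simp)).clm_apply contDiff_const, ?_⟩
  intro t x k
  have h : (fun p : ℝ × V3 => f.1 (p + (0, fun i => (k i : ℝ)))) = f.1 := by
    funext ⟨s, y⟩
    simpa using f.2.2 s y k
  have h2 := fderiv_comp_add_right (𝕜 := ℝ) (f := f.1) (x := (t, x)) (0, fun i => (k i : ℝ))
  rw [h] at h2
  have h3 : ((t, x) : ℝ × V3) + (0, fun i => (k i : ℝ)) = (t, x + fun i => (k i : ℝ)) := by simp
  rw [h3] at h2
  show fderiv ℝ f.1 _ v = fderiv ℝ f.1 _ v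
  rw [h2]⟩

def Dv (v : ℝ × V3) : Derivation ℝ Sm Sm :=
  Derivation.mk' { toFun := dvFun v
                   map_add' := by
                     intro f g
                     apply Subtype.ext; funext p
                     show fderiv ℝ (f.1 + g.1) p v = fderiv ℝ f.1 p v + fderiv ℝ g.1 p v
                     rw [fderiv_add ((sm_diff f) p) ((sm_diff g) p)]; rfl
                   map_smul' := by
                     intro c f
                     apply Subtype.ext; funext p
                     show fderiv ℝ (c • f.1) p v = c • fderiv ℝ f.1 p v
                     rw [fderiv_const_smul ((sm_diff f) p)]; rfl } (by
    intro f g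
    apply Subtype.ext; funext p
    show fderiv ℝ (f.1 * g.1) p v = f.1 p * fderiv ℝ g.1 p v + g.1 p * fderiv ℝ f.1 p v
    rw [fderiv_mul ((sm_diff f) p) ((sm_diff g) p)]; rfl)

theorem Dv_apply (v : ℝ × V3) (f : Sm) (p : ℝ × V3) : (Dv v f).1 p = fderiv ℝ f.1 p v := rfl

theorem Dv_comm (v w : ℝ × V3) (f : Sm) : Dv v (Dv w f) = Dv w (Dv v f) := by
  apply Subtype.ext; funext p
  have hd : DifferentiableAt ℝ (fderiv ℝ f.1) p :=
    ((f.2.1.fderiv_right (m := (⊤ : ℕ∞)) (by simp)).differentiable (by simp)) p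
  have key : ∀ a b : ℝ × V3, (Dv a (Dv b f)).1 p = fderiv ℝ (fderiv ℝ f.1) p a b := by
    intro a b
    show fderiv ℝ (fun q => fderiv ℝ f.1 q b) p a = _
    rw [fderiv_clm_apply hd (differentiableAt_const _)]
    simp
  rw [key, key]
  exact (f.2.1.contDiffAt.isSymmSndFDerivAt (by simp only [minSmoothness_of_isRCLikeNormedField]; exact WithTop.coe_le_coe.2 (le_top : (2 : ℕ∞) ≤ ⊤))).eq v w

def DT : Derivation ℝ Sm Sm := Dv (1, 0)
def DX (i : Fin 3) : Derivation ℝ Sm Sm := Dv (0, Pi.single i 1)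

def ev (p : ℝ × V3) : Sm →ₐ[ℝ] ℝ := (Pi.evalAlgHom ℝ (fun _ : ℝ × V3 => ℝ) p).comp Sm.val

theorem ev_apply (p : ℝ × V3) (f : Sm) : ev p f = f.1 p := rfl

theorem slice_fderiv (f : Sm) (t : ℝ) (x : V3) :
    HasFDerivAt (fun y => f.1 (t, y)) ((fderiv ℝ f.1 (t, x)).comp (ContinuousLinearMap.inr ℝ ℝ V3)) x :=
  ((sm_diff f) (t, x)).hasFDerivAt.comp x (hasFDerivAt_prodMk_right t x)

theorem slice_deriv (f : Sm) (t : ℝ) (x : V3) :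
    HasDerivAt (fun s => f.1 (s, x)) ((DT f).1 (t, x)) t := by
  exact (sm_diff f (t, x)).hasFDerivAt.comp_hasDerivAt t
    ((hasDerivAt_id t).prodMk (hasDerivAt_const t x))

theorem pd_eq (f : Sm) (t : ℝ) (i : Fin 3) (g : V3 → ℝ) (h : ∀ y, g y = f.1 (t, y)) (x : V3) :
    pd i g x = (DX i f).1 (t, x) := by
  obtain rfl : g = fun y => f.1 (t, y) := funext h
  rw [pd, (slice_fderiv f t x).fderiv]
  simp [DX, Dv_apply]

theorem dt_eq (f : Sm) (t : ℝ) (x : V3) (g : ℝ → ℝ) (h : ∀ s, g s = f.1 (s, x)) :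
    deriv g t = (DT f).1 (t, x) := by
  obtain rfl : g = fun s => f.1 (s, x) := funext h
  exact (slice_deriv f t x).deriv

theorem per_reduce (x : V3) : ∃ y ∈ Set.Icc (0 : V3) 1, ∀ (f : Sm) t, f.1 (t, x) = f.1 (t, y) := by
  refine ⟨fun i => Int.fract (x i), ⟨fun i => Int.fract_nonneg _, fun i => (Int.fract_lt_one _).le⟩, ?_⟩
  intro f t
  rw [← f.2.2 t (fun i => Int.fract (x i)) (fun i => ⌊x i⌋)]
  refine congrArg (fun z => f.1 (t, z)) (funext fun i => ?_)
  simp [Int.fract_add_floor]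

theorem sm_bdd (f : Sm) (a b : ℝ) : ∃ M, ∀ t ∈ Set.Icc a b, ∀ x, |f.1 (t, x)| ≤ M := by
  obtain ⟨M, hM⟩ := ((isCompact_Icc (a := a) (b := b)).prod
    (isCompact_Icc (a := (0 : V3)) (b := 1))).exists_bound_of_continuousOn (sm_cont f).continuousOn
  refine ⟨M, fun t ht x => ?_⟩
  obtain ⟨y, hy, h⟩ := per_reduce x
  rw [h]
  exact hM (t, y) ⟨ht, hy⟩

theorem sm_intOn (f : Sm) (t : ℝ) : IntegrableOn (fun x => f.1 (t, x)) (Set.Icc (0 : V3) 1) := by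
  apply ContinuousOn.integrableOn_compact isCompact_Icc
  exact ((sm_cont f).comp (by fun_prop : Continuous fun x : V3 => (t, x))).continuousOn

theorem int_div (F : Fin 3 → Sm) (t : ℝ) :
    ∫ x in Set.Icc (0 : V3) 1, (∑ j, DX j (F j)).1 (t, x) = 0 := by
  have h := integral_divergence_of_hasFDerivAt_off_countable' (n := 2) (E := ℝ) (0 : V3) 1
    (fun i => zero_le_one) (fun i x => (F i).1 (t, x))
    (fun i x => (fderiv ℝ (F i).1 (t, x)).comp (ContinuousLinearMap.inr ℝ ℝ V3)) ∅
    Set.countable_empty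
    (fun i => ((sm_cont (F i)).comp (by fun_prop : Continuous fun x : V3 => (t, x))).continuousOn)
    (fun x _ i => slice_fderiv (F i) t x)
    (by
      have := (sm_intOn (∑ j, DX j (F j))) t
      refine this.congr_fun (fun x _ => ?_) measurableSet_Icc
      simp [DX, Dv_apply])
  have e : ∀ x, (∑ j, DX j (F j)).1 (t, x) = ∑ i, ((fderiv ℝ (F i).1 (t, x)).comp
      (ContinuousLinearMap.inr ℝ ℝ V3)) (Pi.single i 1) := by
    intro x; simp [DX, Dv_apply]
  simp only [e]
  rw [h]
  apply Finset.sum_eq_zero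
  intro i _
  rw [sub_eq_zero]
  congr 1
  funext x
  rw [← (F i).2.2 t (Fin.insertNth i ((0 : V3) i) x) (Pi.single i 1)]
  refine congrArg (fun z => (F i).1 (t, z)) (funext fun j => ?_)
  refine Fin.succAboveCases i ?_ (fun k => ?_) j
  · simp
  · simp

theorem int_deriv (f : Sm) (t : ℝ) :
    HasDerivAt (fun s => ∫ x in Set.Icc (0 : V3) 1, f.1 (s, x))
      (∫ x in Set.Icc (0 : V3) 1, (DT f).1 (t, x)) t := by
  obtain ⟨M, hM⟩ := (sm_bdd (DT f)) (t - 1) (t + 1)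
  refine (hasDerivAt_integral_of_dominated_loc_of_deriv_le (s := Set.Icc (t - 1) (t + 1))
    (μ := volume.restrict (Set.Icc (0 : V3) 1)) (F := fun s x => f.1 (s, x))
    (bound := fun _ => M) (F' := fun s x => (DT f).1 (s, x))
    (Icc_mem_nhds (by linarith) (by linarith)) ?_ ((sm_intOn f) t) ((sm_intOn (DT f)) t).aestronglyMeasurable
    ?_ ?_ ?_).2
  · exact Filter.Eventually.of_forall fun s => ((sm_intOn f) s).aestronglyMeasurable
  · exact Filter.Eventually.of_forall fun x s hs => hM s hs x
  · exact integrableOn_const (isCompact_Icc.measure_lt_top.ne)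
  · exact Filter.Eventually.of_forall fun x s hs => slice_deriv f s x

theorem gron (e : Sm) (F : Fin 3 → Sm) (T K : ℝ)
    (hpos : ∀ t ∈ Set.Icc (0 : ℝ) T, ∀ x, 0 ≤ e.1 (t, x))
    (h0 : ∀ x, e.1 (0, x) = 0)
    (hle : ∀ t ∈ Set.Ioo (0 : ℝ) T, ∀ x,
      (DT e).1 (t, x) ≤ (∑ j, DX j (F j)).1 (t, x) + K * e.1 (t, x)) :
    ∀ t ∈ Set.Icc (0 : ℝ) T, ∀ x, e.1 (t, x) = 0 := by
  intro t ht x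
  set I : ℝ → ℝ := fun s => ∫ x in Set.Icc (0 : V3) 1, e.1 (s, x) with hI
  have hd : ∀ s, HasDerivAt (fun s => I s * Real.exp (-K * s))
      ((∫ x in Set.Icc (0 : V3) 1, (DT e).1 (s, x)) * Real.exp (-K * s)
        + I s * (Real.exp (-K * s) * (-K))) s := by
    intro s
    refine (int_deriv e s).mul (HasDerivAt.exp ?_)
    have := (hasDerivAt_id s).const_mul (-K)
    rw [mul_one] at this
    exact this
  have hanti : AntitoneOn (fun s => I s * Real.exp (-K * s)) (Set.Icc 0 T) := by
    apply antitoneOn_of_deriv_nonpos (convex_Icc 0 T)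
    · exact fun s _ => (hd s).continuousAt.continuousWithinAt
    · exact fun s _ => (hd s).differentiableAt.differentiableWithinAt
    · intro s hs
      rw [interior_Icc] at hs
      rw [(hd s).deriv]
      have : (∫ x in Set.Icc (0 : V3) 1, (DT e).1 (s, x)) ≤ K * I s := by
        calc _ ≤ ∫ x in Set.Icc (0 : V3) 1, ((∑ j, DX j (F j)).1 (s, x) + K * e.1 (s, x)) :=
              integral_mono ((sm_intOn (DT e)) s)
                (((sm_intOn (∑ j, DX j (F j))) s).add (((sm_intOn e) s).const_mul K)) (fun x => hle s hs x)
          _ = K * I s := by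
              rw [integral_add ((sm_intOn (∑ j, DX j (F j))) s) (((sm_intOn e) s).const_mul K), int_div,
                integral_const_mul, zero_add]
      have hp := Real.exp_pos (-K * s)
      nlinarith
  have hI0 : I 0 = 0 := by simp [hI, h0]
  have hle0 := hanti ⟨le_rfl, ht.1.trans ht.2⟩ ht ht.1
  simp only [hI0, zero_mul] at hle0
  have hIt : I t ≤ 0 := by
    have hp := Real.exp_pos (-K * t)
    by_contra hcon
    push Not at hcon
    nlinarith [mul_pos hcon hp]
  have hIn : 0 ≤ I t := integral_nonneg (fun x => hpos t ht x)
  have hz : I t = 0 := le_antisymm hIt hIn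
  rw [hI] at hz
  have hae := (setIntegral_eq_zero_iff_of_nonneg_ae
    (Filter.Eventually.of_forall fun x => hpos t ht x) ((sm_intOn e) t)).1 hz
  have hc : Continuous fun x : V3 => e.1 (t, x) := (sm_cont e).comp (by fun_prop)
  have heq := Measure.eqOn_of_ae_eq hae hc.continuousOn continuousOn_const (by
    rw [← Set.pi_univ_Icc, interior_pi_set Set.finite_univ, closure_pi_set]
    simp [closure_Ioo])
  obtain ⟨y, hy, h⟩ := per_reduce x
  rw [h]
  exact heq hy
end analysis

section final

theorem sum2_le (f : Fin 3 → Fin 3 → ℝ) (K : ℝ) (h : ∀ i j, |f i j| ≤ K) :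
    |∑ i, ∑ j, f i j| ≤ 9 * K := by
  calc |∑ i, ∑ j, f i j| ≤ ∑ i : Fin 3, ∑ j : Fin 3, K :=
        (Finset.abs_sum_le_sum_abs _ _).trans (Finset.sum_le_sum fun i _ =>
          (Finset.abs_sum_le_sum_abs _ _).trans (Finset.sum_le_sum fun j _ => h i j))
    _ = 9 * K := by simp; ring

theorem sum1_le (f : Fin 3 → ℝ) (K : ℝ) (h : ∀ i, |f i| ≤ K) : |∑ i, f i| ≤ 3 * K := by
  calc |∑ i, f i| ≤ ∑ i : Fin 3, K :=
        (Finset.abs_sum_le_sum_abs _ _).trans (Finset.sum_le_sum fun i _ => h i)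
    _ = 3 * K := by simp

theorem bil (N a b m M : ℝ) (ha : a ^ 2 ≤ N) (hb : b ^ 2 ≤ N) (hm : |m| ≤ M) :
    |a * b * m| ≤ N * M := by
  have hN : 0 ≤ N := (sq_nonneg a).trans ha
  have h : |a * b| ≤ N := abs_le.2 ⟨by nlinarith [sq_nonneg (a + b)], by nlinarith [sq_nonneg (a - b)]⟩
  rw [abs_mul]
  exact mul_le_mul h hm (abs_nonneg _) hN

theorem Qbound (ν κ M ρ d N : ℝ) (hν : 0 < ν) (hρ0 : 0 ≤ ρ) (hρ : ρ ≤ M)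
    (w g q : Fin 3 → ℝ) (a S J b : Fin 3 → Fin 3 → ℝ)
    (hN : N = ∑ i, w i ^ 2 + ∑ i, g i ^ 2 + d ^ 2)
    (ha : ∀ i j, |a i j| ≤ M) (hS : ∀ i j, |S i j| ≤ M) (hb : ∀ i j, |b i j| ≤ M)
    (hq : ∀ i, |q i| ≤ M) :
    - ρ * ∑ i, ∑ j, w i * w j * a i j
      - 2 * ν * ρ * ∑ i, ∑ j, ((1/2) * (J i j + J j i)) * J i j
      + 2 * ν * ∑ i, ∑ j, w i * S i j * (g j - d * q j)
      - κ ^ 2 * ∑ i, ∑ j, g i * g i * a j j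
      - 2 * κ ^ 2 * ∑ i, ∑ j, g i * g j * a j i
      - 2 * κ ^ 2 * ∑ i, ∑ j, g i * d * b i j
      + ρ * ∑ i, w i * g i - (1/2) * ∑ j, d * d * a j j
    ≤ (9 * M * M + 2 * ν * (9 * M + 9 * M * M) + 45 * κ ^ 2 * M + 3 * M + 3/2 * M) * N := by
  have hM : 0 ≤ M := hρ0.trans hρ
  have hw : ∀ i, w i ^ 2 ≤ N := by
    intro i
    have h1 := Finset.single_le_sum (f := fun i => w i ^ 2) (fun i _ => sq_nonneg _) (Finset.mem_univ i)
    have h2 : 0 ≤ ∑ i, g i ^ 2 := Finset.sum_nonneg fun i _ => sq_nonneg _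
    nlinarith [sq_nonneg d]
  have hg : ∀ i, g i ^ 2 ≤ N := by
    intro i
    have h1 := Finset.single_le_sum (f := fun i => g i ^ 2) (fun i _ => sq_nonneg _) (Finset.mem_univ i)
    have h2 : 0 ≤ ∑ i, w i ^ 2 := Finset.sum_nonneg fun i _ => sq_nonneg _
    nlinarith [sq_nonneg d]
  have hd : d ^ 2 ≤ N := by
    have h1 : 0 ≤ ∑ i, g i ^ 2 := Finset.sum_nonneg fun i _ => sq_nonneg _
    have h2 : 0 ≤ ∑ i, w i ^ 2 := Finset.sum_nonneg fun i _ => sq_nonneg _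
    linarith
  have hN0 : 0 ≤ N := (sq_nonneg d).trans hd
  have t1 := sum2_le (fun i j => w i * w j * a i j) (N * M) fun i j => bil _ _ _ _ _ (hw i) (hw j) (ha i j)
  have t2 : 0 ≤ ∑ i, ∑ j, ((1/2) * (J i j + J j i)) * J i j := by
    simp only [Fin.sum_univ_three]
    nlinarith [sq_nonneg (J 0 0), sq_nonneg (J 1 1), sq_nonneg (J 2 2), sq_nonneg (J 0 1 + J 1 0),
      sq_nonneg (J 0 2 + J 2 0), sq_nonneg (J 1 2 + J 2 1)]
  have t3 := sum2_le (fun i j => w i * S i j * (g j - d * q j)) (N * M + N * (M * M)) fun i j => by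
    have e : w i * S i j * (g j - d * q j) = w i * g j * S i j - w i * d * (S i j * q j) := by ring
    rw [e]
    refine (abs_sub _ _).trans (add_le_add (bil _ _ _ _ _ (hw i) (hg j) (hS i j))
      (bil _ _ _ _ _ (hw i) hd ?_))
    rw [abs_mul]
    exact mul_le_mul (hS i j) (hq j) (abs_nonneg _) hM
  have t4 := sum2_le (fun i j => g i * g i * a j j) (N * M) fun i j => bil _ _ _ _ _ (hg i) (hg i) (ha j j)
  have t5 := sum2_le (fun i j => g i * g j * a j i) (N * M) fun i j => bil _ _ _ _ _ (hg i) (hg j) (ha j i)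
  have t6 := sum2_le (fun i j => g i * d * b i j) (N * M) fun i j => bil _ _ _ _ _ (hg i) hd (hb i j)
  have t7 := sum1_le (fun i => w i * g i) N fun i => by
    simpa using bil _ _ _ 1 1 (hw i) (hg i) (by simp)
  have t8 := sum1_le (fun j => d * d * a j j) (N * M) fun j => bil _ _ _ _ _ hd hd (ha j j)
  simp only [abs_le] at t1 t3 t4 t5 t6 t7 t8
  generalize (∑ i, ∑ j, w i * w j * a i j) = X1 at *
  generalize (∑ i, ∑ j, ((1/2) * (J i j + J j i)) * J i j) = X2 at *
  generalize (∑ i, ∑ j, w i * S i j * (g j - d * q j)) = X3 at *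
  generalize (∑ i, ∑ j, g i * g i * a j j) = X4 at *
  generalize (∑ i, ∑ j, g i * g j * a j i) = X5 at *
  generalize (∑ i, ∑ j, g i * d * b i j) = X6 at *
  generalize (∑ i, w i * g i) = X7 at *
  generalize (∑ j, d * d * a j j) = X8 at *
  have hk := sq_nonneg κ
  have s1 : -ρ * X1 ≤ M * (9 * (N * M)) := by
    have := mul_le_mul_of_nonneg_left (show -X1 ≤ 9 * (N * M) by linarith [t1.1]) hρ0
    have := mul_le_mul_of_nonneg_right hρ (show 0 ≤ 9 * (N * M) by positivity)
    linarith
  have s2 : 0 ≤ 2 * ν * ρ * X2 := by positivity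
  have s3 := mul_le_mul_of_nonneg_left t3.2 (show 0 ≤ 2 * ν by positivity)
  have s4 := mul_le_mul_of_nonneg_left t4.1 hk
  have s5 := mul_le_mul_of_nonneg_left t5.1 hk
  have s6 := mul_le_mul_of_nonneg_left t6.1 hk
  have s7 : ρ * X7 ≤ M * (3 * N) := by
    have := mul_le_mul_of_nonneg_left t7.2 hρ0
    have := mul_le_mul_of_nonneg_right hρ (show 0 ≤ 3 * N by positivity)
    linarith
  linarith [t8.1]

theorem trans_C (ρ : ℝ → V3 → ℝ) (u : ℝ → V3 → V3) (r : Sm) (v : Fin 3 → Sm)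
    (hr : ∀ t x, ρ t x = r.1 (t, x)) (hv : ∀ i t x, u t x i = (v i).1 (t, x)) (t : ℝ) (x : V3)
    (h : deriv (fun s => ρ s x) t + vdiv (fun y => ρ t y • u t y) x = 0) :
    ev (t, x) (ContE DT DX r v) = 0 := by
  rw [dt_eq r t x _ (fun s => hr s x), vdiv] at h
  have h2 : ∀ i, pd i (fun y => (ρ t y • u t y) i) x = (DX i (r * v i)).1 (t, x) := fun i =>
    pd_eq (r * v i) t i _ (fun y => by simp [hr, hv]) x
  simp only [h2] at h
  simp only [ContE, map_add, map_sum, ev_apply]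
  exact h

theorem trans_M (ν κ : ℝ) (ρ : ℝ → V3 → ℝ) (u : ℝ → V3 → V3) (r : Sm) (v : Fin 3 → Sm)
    (hr : ∀ t x, ρ t x = r.1 (t, x)) (hv : ∀ i t x, u t x i = (v i).1 (t, x)) (t : ℝ) (x : V3)
    (h : (fun i => deriv (fun s => ρ s x * u s x i) t)
        + mdiv (fun y i j => ρ t y * u t y i * u t y j) x
        - (2 * ν) • mdiv (fun y i j => ρ t y * symJ (u t) y i j) x
        - (2 * κ ^ 2) • (ρ t x • grad (fun y => lap (ρ t) y) x)
      = 0) (i : Fin 3) :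
    ev (t, x) (MomE DT DX ν κ r v i) = 0 := by
  have h1 := congrFun h i
  have e1 : deriv (fun s => ρ s x * u s x i) t = (DT (r * v i)).1 (t, x) :=
    dt_eq _ t x _ fun s => by simp [hr, hv]
  have e2 : ∀ j, pd j (fun y => ρ t y * u t y i * u t y j) x = (DX j (r * v i * v j)).1 (t, x) :=
    fun j => pd_eq _ t j _ (fun y => by simp [hr, hv]) x
  have e3 : ∀ i j y, pd j (fun y => u t y i) y = (DX j (v i)).1 (t, y) :=
    fun i j y => pd_eq _ t j _ (fun y => hv i t y) y
  have e4 : ∀ j, pd j (fun y => ρ t y * symJ (u t) y i j) x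
      = (DX j (r * SymD DX v i j)).1 (t, x) :=
    fun j => pd_eq _ t j _ (fun y => by simp [hr, symJ, jacb, e3, SymD]; left; ring) x
  have e5 : ∀ k y, pd k (ρ t) y = (DX k r).1 (t, y) :=
    fun k y => pd_eq _ t k _ (fun y => hr t y) y
  have e6 : ∀ k y, pd k (fun y => pd k (ρ t) y) y = (DX k (DX k r)).1 (t, y) :=
    fun k y => pd_eq _ t k _ (fun y => e5 k y) y
  have e7 : pd i (fun y => lap (ρ t) y) x = (DX i (Lpl DX r)).1 (t, x) :=
    pd_eq _ t i _ (fun y => by simp [lap, e6, Lpl]) x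
  simp only [Pi.add_apply, Pi.sub_apply, Pi.smul_apply, mdiv, grad, e1, e2, e4, e7,
    Pi.zero_apply, smul_eq_mul] at h1
  rw [hr] at h1
  simp only [MomE, map_add, map_sub, map_sum, map_smul, map_mul, ev_apply, smul_eq_mul]
  exact h1

theorem unif_bdd {ι : Type*} [Finite ι] (f : ι → Sm) (T : ℝ) :
    ∃ M, ∀ i, ∀ t ∈ Set.Icc 0 T, ∀ x, |(f i).1 (t, x)| ≤ M := by
  choose m hm using fun i => sm_bdd (f i) 0 T
  obtain ⟨M, hM⟩ := (Set.finite_range m).bddAbove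
  exact ⟨M, fun i t ht x => (hm i t ht x).trans (hM ⟨i, rfl⟩)⟩

theorem main_sm (ν κ T c : ℝ) (hν : 0 < ν) (hκ : 0 < κ) (hc : 0 < c)
    (r R : Sm) (u U : Fin 3 → Sm)
    (hr : ∀ t ∈ Set.Icc (0 : ℝ) T, ∀ x, c ≤ r.1 (t, x))
    (hR : ∀ t ∈ Set.Icc (0 : ℝ) T, ∀ x, c ≤ R.1 (t, x))
    (hC1 : ∀ t ∈ Set.Ioo (0 : ℝ) T, ∀ x, ev (t, x) (ContE DT DX r u) = 0)
    (hC2 : ∀ t ∈ Set.Ioo (0 : ℝ) T, ∀ x, ev (t, x) (ContE DT DX R U) = 0)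
    (hM1 : ∀ t ∈ Set.Ioo (0 : ℝ) T, ∀ x i, ev (t, x) (MomE DT DX ν κ r u i) = 0)
    (hM2 : ∀ t ∈ Set.Ioo (0 : ℝ) T, ∀ x i, ev (t, x) (MomE DT DX ν κ R U i) = 0)
    (h0r : ∀ x, r.1 (0, x) = R.1 (0, x)) (h0u : ∀ i x, (u i).1 (0, x) = (U i).1 (0, x)) :
    ∀ t ∈ Set.Icc (0 : ℝ) T, ∀ x, r.1 (t, x) = R.1 (t, x) ∧ ∀ i, (u i).1 (t, x) = (U i).1 (t, x) := by
  have hEn : ∀ p, (En DX κ r R u U).1 p = ∑ i, (1/2) * (r.1 p * ((u i).1 p - (U i).1 p) ^ 2)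
      + κ ^ 2 * ∑ i, ((DX i (r - R)).1 p) ^ 2 + (1/2) * ((r - R).1 p) ^ 2 := by
    intro p
    simp only [← ev_apply, ← map_sub]
    simp only [En, map_add, map_sum, map_smul, map_mul, smul_eq_mul, sq]
  obtain ⟨Ma, ha⟩ := unif_bdd (fun k : Fin 3 × Fin 3 => DX k.2 (U k.1)) T
  obtain ⟨MS, hS⟩ := unif_bdd (fun k : Fin 3 × Fin 3 => SymD DX U k.1 k.2) T
  obtain ⟨Mb, hb⟩ := unif_bdd (fun k : Fin 3 × Fin 3 => DX k.1 (DX k.2 (U k.2))) T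
  obtain ⟨Mq, hq⟩ := unif_bdd (fun k : Fin 3 => DX k R) T
  obtain ⟨Mr, hr'⟩ := sm_bdd r 0 T
  obtain ⟨M, m1, m2, m3, m4, m5⟩ : ∃ M, Ma ≤ M ∧ MS ≤ M ∧ Mb ≤ M ∧ Mq / c ≤ M ∧ Mr ≤ M :=
    ⟨max Ma (max MS (max Mb (max (Mq / c) Mr))), by simp⟩
  obtain ⟨m, hm0, hm1, hm2, hm3⟩ : ∃ m, 0 < m ∧ m ≤ c / 2 ∧ m ≤ κ ^ 2 ∧ m ≤ 1/2 :=
    ⟨min (c / 2) (min (κ ^ 2) (1/2)), by positivity, by simp⟩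
  set K := 9 * M * M + 2 * ν * (9 * M + 9 * M * M) + 45 * κ ^ 2 * M + 3 * M + 3/2 * M with hK
  have hlow : ∀ t ∈ Set.Icc (0 : ℝ) T, ∀ x, m * (∑ i, ((u i).1 (t, x) - (U i).1 (t, x)) ^ 2
      + ∑ i, ((DX i (r - R)).1 (t, x)) ^ 2 + ((r - R).1 (t, x)) ^ 2) ≤ (En DX κ r R u U).1 (t, x) := by
    intro t ht x
    rw [hEn, mul_add, mul_add, Finset.mul_sum]
    refine add_le_add (add_le_add (Finset.sum_le_sum fun i _ => ?_) ?_) ?_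
    · have := hr t ht x
      have h2 := mul_le_mul_of_nonneg_right (show m ≤ 1/2 * r.1 (t, x) by linarith)
        (sq_nonneg ((u i).1 (t, x) - (U i).1 (t, x)))
      linarith
    · exact mul_le_mul_of_nonneg_right hm2 (Finset.sum_nonneg fun i _ => sq_nonneg _)
    · exact mul_le_mul_of_nonneg_right hm3 (sq_nonneg _)
  have hz := gron (En DX κ r R u U) (Flux DT DX ν κ r R u U) T (K / m) ?_ ?_ ?_
  · intro t ht x
    have h := hlow t ht x
    rw [hz t ht x] at h
    have h1 : 0 ≤ ∑ i, ((u i).1 (t, x) - (U i).1 (t, x)) ^ 2 := Finset.sum_nonneg fun i _ => sq_nonneg _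
    have h2 : 0 ≤ ∑ i, ((DX i (r - R)).1 (t, x)) ^ 2 := Finset.sum_nonneg fun i _ => sq_nonneg _
    have h3 := sq_nonneg ((r - R).1 (t, x))
    have h4 : (∑ i, ((u i).1 (t, x) - (U i).1 (t, x)) ^ 2
      + ∑ i, ((DX i (r - R)).1 (t, x)) ^ 2 + ((r - R).1 (t, x)) ^ 2) ≤ 0 := by
      by_contra hcon
      push Not at hcon
      have := mul_pos hm0 hcon
      linarith
    constructor
    · have : (r - R).1 (t, x) = 0 := pow_eq_zero_iff (two_ne_zero) |>.1 (by linarith)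
      exact sub_eq_zero.1 this
    · intro i
      have h5 : ∑ i, ((u i).1 (t, x) - (U i).1 (t, x)) ^ 2 = 0 := by linarith
      have h6 := (Finset.sum_eq_zero_iff_of_nonneg (fun i _ => sq_nonneg _)).1 h5 i (Finset.mem_univ i)
      exact sub_eq_zero.1 (pow_eq_zero_iff (two_ne_zero) |>.1 h6)
  · intro t ht x
    refine le_trans (mul_nonneg hm0.le ?_) (hlow t ht x)
    positivity
  · intro x
    have hsub : ∀ y, (r - R).1 (0, y) = 0 := fun y => sub_eq_zero.2 (h0r y)
    have hD : ∀ i, (DX i (r - R)).1 (0, x) = 0 := by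
      intro i
      rw [← pd_eq (r - R) 0 i (fun _ => 0) (fun y => (hsub y).symm) x]
      simp [pd]
    rw [hEn]
    simp only [hsub, hD, h0u]
    simp
  · intro t ht x
    have ht' : t ∈ Set.Icc 0 T := ⟨ht.1.le, ht.2.le⟩
    have hRp : 0 < R.1 (t, x) := hc.trans_le (hR t ht' x)
    have hid := energy_id DT DX (ev (t, x)) ν κ (fun i f => Dv_comm _ _ _) (fun i j f => Dv_comm _ _ _)
      r R u U hRp.ne' (hC1 t ht x) (hC2 t ht x) (hM1 t ht x) (hM2 t ht x)
    have hQ := Qbound ν κ M (r.1 (t, x)) ((r - R).1 (t, x)) _ hν (hc.le.trans (hr t ht' x))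
      ((le_abs_self _).trans ((hr' t ht' x).trans m5))
      (fun i => (u i).1 (t, x) - (U i).1 (t, x)) (fun i => (DX i (r - R)).1 (t, x))
      (fun i => (DX i R).1 (t, x) / R.1 (t, x))
      (fun i j => (DX j (U i)).1 (t, x)) (fun i j => (SymD DX U i j).1 (t, x))
      (fun i j => (DX j (u i - U i)).1 (t, x)) (fun i j => (DX i (DX j (U j))).1 (t, x)) rfl
      (fun i j => (ha (i, j) t ht' x).trans m1) (fun i j => (hS (i, j) t ht' x).trans m2)
      (fun i j => (hb (i, j) t ht' x).trans m3)
      (fun i => by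
        refine le_trans ?_ m4
        rw [abs_div, abs_of_pos hRp]
        exact div_le_div₀ ((abs_nonneg _).trans (hq i t ht' x)) (hq i t ht' x) hc (hR t ht' x))
    have hl := hlow t ht' x
    have hKn : 0 ≤ K := by
      have : 0 ≤ M := (abs_nonneg _).trans ((hr' t ht' x).trans m5)
      positivity
    have hfin := mul_le_mul_of_nonneg_left hl (show 0 ≤ K / m by positivity)
    rw [← mul_assoc, div_mul_cancel₀ _ hm0.ne'] at hfin
    have hsym : ∀ i j, ev (t, x) (SymD DX (u - U) i j) =
        (1/2) * ((DX j (u i - U i)).1 (t, x) + (DX i (u j - U j)).1 (t, x)) := by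
      intro i j
      simp only [SymD, map_smul, map_add, ev_apply, smul_eq_mul, Pi.sub_apply]
    have hsb : ∀ i, ev (t, x) (u i - U i) = (u i).1 (t, x) - (U i).1 (t, x) := fun i => rfl
    simp only [hsym, hsb] at hid
    simp only [ev_apply] at hid
    rw [hid]
    have hQ2 := hQ.trans hfin
    clear_value K
    clear hQ hid hfin hl hlow hEn
    linarith [hQ2]
end final

/-- weak-strong uniqueness for pressureless capillary fluids,
classical form: two smooth periodic solutions of the pressureless
Navier–Stokes–Korteweg system with densities bounded below by `c > 0` and the
same initial data coincide on `[0,T] × ℝ³`. -/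
theorem weak_strong_uniqueness_pressureless
    (ν κ T c : ℝ) (hν : 0 < ν) (hκ : 0 < κ) (hT : 0 < T) (hc : 0 < c)
    (ρ₁ ρ₂ : ℝ → V3 → ℝ) (u₁ u₂ : ℝ → V3 → V3)
    (hρ₁ : ContDiff ℝ (⊤ : ℕ∞) (fun p : ℝ × V3 => ρ₁ p.1 p.2))
    (hρ₂ : ContDiff ℝ (⊤ : ℕ∞) (fun p : ℝ × V3 => ρ₂ p.1 p.2))
    (hu₁ : ContDiff ℝ (⊤ : ℕ∞) (fun p : ℝ × V3 => u₁ p.1 p.2))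
    (hu₂ : ContDiff ℝ (⊤ : ℕ∞) (fun p : ℝ × V3 => u₂ p.1 p.2))
    (hρ₁per : ∀ t x (k : Fin 3 → ℤ), ρ₁ t (x + fun i => (k i : ℝ)) = ρ₁ t x)
    (hρ₂per : ∀ t x (k : Fin 3 → ℤ), ρ₂ t (x + fun i => (k i : ℝ)) = ρ₂ t x)
    (hu₁per : ∀ t x (k : Fin 3 → ℤ), u₁ t (x + fun i => (k i : ℝ)) = u₁ t x)
    (hu₂per : ∀ t x (k : Fin 3 → ℤ), u₂ t (x + fun i => (k i : ℝ)) = u₂ t x)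
    (hpos₁ : ∀ t ∈ Set.Icc (0 : ℝ) T, ∀ x, c ≤ ρ₁ t x)
    (hpos₂ : ∀ t ∈ Set.Icc (0 : ℝ) T, ∀ x, c ≤ ρ₂ t x)
    (hcont₁ : ∀ t ∈ Set.Ioo (0 : ℝ) T, ∀ x,
      deriv (fun s => ρ₁ s x) t + vdiv (fun y => ρ₁ t y • u₁ t y) x = 0)
    (hcont₂ : ∀ t ∈ Set.Ioo (0 : ℝ) T, ∀ x,
      deriv (fun s => ρ₂ s x) t + vdiv (fun y => ρ₂ t y • u₂ t y) x = 0)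
    (hmom₁ : ∀ t ∈ Set.Ioo (0 : ℝ) T, ∀ x,
      (fun i => deriv (fun s => ρ₁ s x * u₁ s x i) t)
        + mdiv (fun y i j => ρ₁ t y * u₁ t y i * u₁ t y j) x
        - (2 * ν) • mdiv (fun y i j => ρ₁ t y * symJ (u₁ t) y i j) x
        - (2 * κ ^ 2) • (ρ₁ t x • grad (fun y => lap (ρ₁ t) y) x)
      = 0)
    (hmom₂ : ∀ t ∈ Set.Ioo (0 : ℝ) T, ∀ x,
      (fun i => deriv (fun s => ρ₂ s x * u₂ s x i) t)
        + mdiv (fun y i j => ρ₂ t y * u₂ t y i * u₂ t y j) x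
        - (2 * ν) • mdiv (fun y i j => ρ₂ t y * symJ (u₂ t) y i j) x
        - (2 * κ ^ 2) • (ρ₂ t x • grad (fun y => lap (ρ₂ t) y) x)
      = 0)
    (hid_ρ : ∀ x, ρ₁ 0 x = ρ₂ 0 x)
    (hid_u : ∀ x, u₁ 0 x = u₂ 0 x) :
    ∀ t ∈ Set.Icc (0 : ℝ) T, ∀ x, ρ₁ t x = ρ₂ t x ∧ u₁ t x = u₂ t x := by
  let r₁ : Sm := ⟨fun p => ρ₁ p.1 p.2, hρ₁, fun t x k => hρ₁per t x k⟩
  let r₂ : Sm := ⟨fun p => ρ₂ p.1 p.2, hρ₂, fun t x k => hρ₂per t x k⟩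
  let v₁ : Fin 3 → Sm := fun i => ⟨fun p => u₁ p.1 p.2 i, contDiff_pi.1 hu₁ i,
    fun t x k => congrFun (hu₁per t x k) i⟩
  let v₂ : Fin 3 → Sm := fun i => ⟨fun p => u₂ p.1 p.2 i, contDiff_pi.1 hu₂ i,
    fun t x k => congrFun (hu₂per t x k) i⟩
  intro t ht x
  have h := main_sm ν κ T c hν hκ hc r₁ r₂ v₁ v₂ hpos₁ hpos₂
    (fun t ht x => trans_C ρ₁ u₁ r₁ v₁ (fun _ _ => rfl) (fun _ _ _ => rfl) t x (hcont₁ t ht x))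
    (fun t ht x => trans_C ρ₂ u₂ r₂ v₂ (fun _ _ => rfl) (fun _ _ _ => rfl) t x (hcont₂ t ht x))
    (fun t ht x => trans_M ν κ ρ₁ u₁ r₁ v₁ (fun _ _ => rfl) (fun _ _ _ => rfl) t x (hmom₁ t ht x))
    (fun t ht x => trans_M ν κ ρ₂ u₂ r₂ v₂ (fun _ _ => rfl) (fun _ _ _ => rfl) t x (hmom₂ t ht x))
    hid_ρ (fun i x => congrFun (hid_u x) i) t ht x
  exact ⟨h.1, funext h.2⟩
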